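/- Let X be a compact connected linearly ordered topological space. The following are equivalent: (A) for every pair a < b in X the group H₊([a,b]) of order-preserving self-homeomorphisms of [a,b] is nontrivial; (B) for every pair a < b in X the group H₊([a,b]) is nonabelian. -/

import Mathlib

/-! The implication from nonabelian to nontrivial is immediate, since the identity commutes with
everything. Conversely, let `h` be a nontrivial order-preserving homeomorphism of `[a,b]`, moving
`x`, and let `[c,d]` be the interval with endpoints `x` and `h x`. By hypothesis `[c,d]` carries
a nontrivial order-preserving homeomorphism; extend it by the identity to `g`
(`exists_orderIso_extend`). If `g` moves `z ∈ (c,d)`, then monotonicity of `h` pushes `h z`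
out of `(c,d)`, so `g (h z) = h z`, whereas `h (g z) ≠ h z`. Thus `g` and `h` do not commute. -/

/-- Extension by the identity of a self-map of `[c,d]` to the whole order. -/
noncomputable def extendById {X : Type*} [LinearOrder X] {c d : X}
    (g : Set.Icc c d → Set.Icc c d) (z : X) : X :=
  open Classical in if hz : z ∈ Set.Icc c d then (g ⟨z, hz⟩ : X) else z

theorem extendById_mem {X : Type*} [LinearOrder X] {c d : X}
    (g : Set.Icc c d → Set.Icc c d) (z : Set.Icc c d) : extendById g z = g z := by
  simp [extendById]

theorem extendById_notMem {X : Type*} [LinearOrder X] {c d : X}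
    (g : Set.Icc c d → Set.Icc c d) {z : X} (hz : z ∉ Set.Icc c d) : extendById g z = z := by
  simp only [extendById, dif_neg hz]

theorem extendById_monotone {X : Type*} [LinearOrder X] {c d : X}
    {g : Set.Icc c d → Set.Icc c d} (hg : Monotone g) : Monotone (extendById g) := by
  intro y z hyz
  by_cases hy : y ∈ Set.Icc c d <;> by_cases hz : z ∈ Set.Icc c d
  · rw [extendById_mem g ⟨y, hy⟩, extendById_mem g ⟨z, hz⟩]
    exact hg (a := ⟨y, hy⟩) (b := ⟨z, hz⟩) hyz
  · rw [extendById_mem g ⟨y, hy⟩, extendById_notMem g hz]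
    have h1 := (g ⟨y, hy⟩).2.2
    have h2 : d < z := by
      by_contra! h
      exact hz ⟨hy.1.trans hyz, h⟩
    exact h1.trans h2.le
  · rw [extendById_mem g ⟨z, hz⟩, extendById_notMem g hy]
    have h1 := (g ⟨z, hz⟩).2.1
    have h2 : y < c := by
      by_contra! h
      exact hy ⟨h, hyz.trans hz.2⟩
    exact h2.le.trans h1
  · rwa [extendById_notMem g hy, extendById_notMem g hz]

theorem extendById_leftInverse {X : Type*} [LinearOrder X] {c d : X}
    {g k : Set.Icc c d → Set.Icc c d} (h : Function.LeftInverse k g) :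
    Function.LeftInverse (extendById k) (extendById g) := by
  intro z
  by_cases hz : z ∈ Set.Icc c d
  · rw [extendById_mem g ⟨z, hz⟩, extendById_mem k, h]
  · rw [extendById_notMem g hz, extendById_notMem k hz]

theorem symm_monotone_of_monotone {α : Type*} [LinearOrder α] (g : α ≃ α) (hg : Monotone g) :
    Monotone g.symm := by
  intro y z hyz
  rw [← (hg.strictMono_of_injective g.injective).le_iff_le]
  simpa using hyz

/-- An increasing permutation of `[c,d]` extends to an order automorphism of the whole order that
is the identity off the open interval `(c,d)`. -/
theorem exists_orderIso_extend {X : Type*} [LinearOrder X] {c d : X} (hcd : c ≤ d)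
    (g : Set.Icc c d ≃ Set.Icc c d) (hg : Monotone g) :
    ∃ E : X ≃o X, (∀ z : Set.Icc c d, E z = g z) ∧ ∀ z, z ≤ c ∨ d ≤ z → E z = z := by
  let e : X ≃ X := ⟨extendById g, extendById g.symm,
    extendById_leftInverse g.left_inv, extendById_leftInverse g.right_inv⟩
  have he : StrictMono e := (extendById_monotone hg).strictMono_of_injective e.injective
  let E : X ≃o X := ⟨e, he.le_iff_le⟩
  have hE : ∀ z : Set.Icc c d, E z = g z := extendById_mem g
  refine ⟨E, hE, fun z hz => ?_⟩
  by_cases hm : z ∈ Set.Icc c d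
  · have hs := symm_monotone_of_monotone g hg
    refine (hE ⟨z, hm⟩).trans ?_
    -- An endpoint of `[c,d]` is fixed, being the least or greatest element.
    rcases hz with hz | hz
    · obtain rfl : z = c := le_antisymm hz hm.1
      have h1 := hg (a := ⟨z, hm⟩) (b := g.symm ⟨z, hm⟩) (g.symm ⟨z, hm⟩).2.1
      rw [g.apply_symm_apply] at h1
      exact le_antisymm h1 (g ⟨z, hm⟩).2.1
    · obtain rfl : z = d := le_antisymm hm.2 hz
      have h1 := hg (a := g.symm ⟨z, hm⟩) (b := ⟨z, hm⟩) (g.symm ⟨z, hm⟩).2.2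
      rw [g.apply_symm_apply] at h1
      exact le_antisymm (g ⟨z, hm⟩).2.2 h1
  · exact extendById_notMem g hm

/-- For an ordered continuum `X` (compact connected LOTS), the following are equivalent:
(A) for every `a < b` the group of order-preserving homeomorphisms of `[a,b]` is nontrivial;
(B) for every `a < b` this group is nonabelian. -/
theorem nontrivial_iff_nonabelian_orderHomeo {X : Type*} [LinearOrder X]
    [TopologicalSpace X] [OrderTopology X] [CompactSpace X] [ConnectedSpace X] :
    (∀ a b : X, a < b →
      ∃ h : Set.Icc a b ≃ₜ Set.Icc a b, Monotone ⇑h ∧ h ≠ Homeomorph.refl (Set.Icc a b)) ↔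
    (∀ a b : X, a < b →
      ∃ h₁ h₂ : Set.Icc a b ≃ₜ Set.Icc a b, Monotone ⇑h₁ ∧ Monotone ⇑h₂ ∧
        h₁.trans h₂ ≠ h₂.trans h₁) := by
  constructor
  · intro H a b hab
    obtain ⟨h, hm, hne⟩ := H a b hab
    obtain ⟨x, hx⟩ : ∃ x, h x ≠ x := by
      by_contra! hc
      exact hne (Homeomorph.ext hc)
    -- `[c,d]` has endpoints `x` and `h x`; its image under `h` lies off `(c,d)`.
    obtain ⟨c, d, hcd, hout⟩ : ∃ c d : Set.Icc a b, c < d ∧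
        ∀ z, c ≤ z → z ≤ d → h z ≤ c ∨ d ≤ h z := by
      rcases lt_or_gt_of_ne hx with hlt | hlt
      · exact ⟨h x, x, hlt, fun z _ h2 => Or.inl (hm h2)⟩
      · exact ⟨x, h x, hlt, fun z h1 _ => Or.inr (hm h1)⟩
    obtain ⟨g, gm, gne⟩ := H c d hcd
    obtain ⟨z, hz⟩ : ∃ z, g z ≠ z := by
      by_contra! hc
      exact gne (Homeomorph.ext hc)
    obtain ⟨E, hE, hE'⟩ := exists_orderIso_extend (le_of_lt hcd : (c : X) ≤ d) g.toEquiv gm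
    have hEa : E a = a := hE' a (Or.inl c.2.1)
    have hEb : E b = b := hE' b (Or.inr d.2.2)
    have hmem : ∀ y, y ∈ Set.Icc a b ↔ E y ∈ Set.Icc a b := by
      intro y
      have h1 := E.le_iff_le (x := a) (y := y)
      have h2 := E.le_iff_le (x := y) (y := b)
      rw [hEa] at h1
      rw [hEb] at h2
      simp only [Set.mem_Icc, h1, h2]
    let G : Set.Icc a b ≃ₜ Set.Icc a b := E.toHomeomorph.subtype hmem
    have hG : ∀ y, (G y : X) = E y := fun _ => rfl
    refine ⟨h, G, hm, fun y y' hyy => E.monotone hyy, fun hcomm => hz ?_⟩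
    let w : Set.Icc a b := ⟨z, c.2.1.trans z.2.1, z.2.2.trans d.2.2⟩
    have h1 : G (h w) = h (G w) := DFunLike.congr_fun hcomm w
    have h2 : G (h w) = h w := Subtype.ext (hE' _ (hout w z.2.1 z.2.2))
    have h3 : G w = w := h.injective (h1.symm.trans h2)
    have h4 : E z = z := congrArg Subtype.val h3
    exact Subtype.ext ((hE z).symm.trans h4)
  · intro H a b hab
    obtain ⟨h₁, h₂, m1, -, hne⟩ := H a b hab
    refine ⟨h₁, m1, ?_⟩
    rintro rfl
    exact hne (Homeomorph.ext fun _ => rfl)
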